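/- Let P ∈ ℚ[T,X] be an irreducible polynomial, separable of degree ≥ 1 in X over ℚ(T), with nontrivial Galois group G over ℚ(T). Let Δ(T) and ℓ(T) be the discriminant and leading coefficient of P (in X). Let M₁,…,M_r be representatives of all conjugacy classes of maximal subgroups of G, F_i the fixed field of M_i, and f_i(T,X) a monic irreducible polynomial in ℚ[T][X] such that F_i/ℚ(T) is generated by a root of f_i(T,X). Suppose t ∈ ℚ satisfies Δ(t)·ℓ(t)·∏_{i=1}^r disc f_i(t,X) ≠ 0. Then [the specialized polynomial P(t,X) is reducible over ℚ, or its Galois group G_t over ℚ is not isomorphic to G] if and only if there exists an index i such that f_i(t,X) has a rational root. -/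

import Mathlib

open Polynomial

section Helpers
open scoped Pointwise

theorem key_place (R K L k : Type) [CommRing R] [IsDomain R] [IsIntegrallyClosed R]
    [Field K] [Algebra R K] [IsFractionRing R K] [Field L] [Algebra K L] [Algebra R L]
    [IsScalarTower R K L] [FiniteDimensional K L] [IsGalois K L] [Field k]
    (φ : R →+* k) (hφ : Function.Surjective φ) :
    ∃ (Ω : Type) (_ : Field Ω) (_ : Algebra k Ω) (ψ : integralClosure R L →+* Ω)
      (D : Subgroup (L ≃ₐ[K] L)) (ρ : D →* (Ω ≃ₐ[k] Ω)),
      Normal k Ω ∧ (∀ r : R, ψ (algebraMap R _ r) = algebraMap k Ω (φ r)) ∧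
      Function.Surjective ρ ∧
      ∀ (σ : D) (b b' : integralClosure R L), (σ : L ≃ₐ[K] L) (b : L) = b' →
        ρ σ (ψ b) = ψ b' := by
  have hcomm : SMulCommClass (L ≃ₐ[K] L) R L := ⟨fun g r x => by
    rw [Algebra.smul_def, Algebra.smul_def, IsScalarTower.algebraMap_apply R K L]
    simp⟩
  have hinv : Algebra.IsInvariant R (integralClosure R L) (L ≃ₐ[K] L) := ⟨fun b hb => by
    have h1 : (b : L) ∈ (⊥ : IntermediateField K L) := by
      rw [IsGalois.mem_bot_iff_fixed]
      intro g
      exact congrArg Subtype.val (hb g)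
    obtain ⟨y, hy⟩ := IntermediateField.mem_bot.mp h1
    have hyint : IsIntegral R y := by
      have : IsIntegral R (algebraMap K L y) := hy ▸ b.2
      exact (isIntegral_algebraMap_iff (algebraMap K L).injective).mp this
    obtain ⟨r, hr⟩ := IsIntegrallyClosed.isIntegral_iff.mp hyint
    refine ⟨r, Subtype.ext ?_⟩
    rw [← hy, ← hr, ← IsScalarTower.algebraMap_apply]
    rfl⟩
  let p : Ideal R := RingHom.ker φ
  have hp : p.IsMaximal := RingHom.ker_isMaximal_of_surjective φ hφ
  have hfs : FaithfulSMul R L := by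
    rw [faithfulSMul_iff_algebraMap_injective, IsScalarTower.algebraMap_eq R K L]
    exact (algebraMap K L).injective.comp (IsFractionRing.injective R K)
  have hfs' : FaithfulSMul R (integralClosure R L) := by
    rw [faithfulSMul_iff_algebraMap_injective]
    intro a b h
    exact FaithfulSMul.algebraMap_injective R L (congrArg Subtype.val h)
  obtain ⟨Q, hQ, hQp⟩ := Ideal.exists_maximal_ideal_liesOver_of_isIntegral
    (S := integralClosure R L) p
  let : Field (R ⧸ p) := Ideal.Quotient.field p
  let : Field (integralClosure R L ⧸ Q) := Ideal.Quotient.field Q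
  let e : (R ⧸ p) ≃+* k := RingHom.quotientKerEquivOfSurjective hφ
  let : Algebra (R ⧸ p) k := e.toRingHom.toAlgebra
  let : Algebra k (integralClosure R L ⧸ Q) :=
    ((algebraMap (R ⧸ p) (integralClosure R L ⧸ Q)).comp e.symm.toRingHom).toAlgebra
  have hst : IsScalarTower (R ⧸ p) k (integralClosure R L ⧸ Q) :=
    IsScalarTower.of_algebraMap_eq fun x => by
      simp [RingHom.algebraMap_toAlgebra]
  have hfr : IsFractionRing (R ⧸ p) k := by
    have : IsFractionRing (R ⧸ p) (R ⧸ p) := inferInstance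
    exact IsLocalization.isLocalization_of_algEquiv _
      (AlgEquiv.ofRingEquiv (f := e) (fun x => rfl) : (R ⧸ p) ≃ₐ[R ⧸ p] k)
  have hfr2 : IsFractionRing (integralClosure R L ⧸ Q) (integralClosure R L ⧸ Q) := inferInstance
  refine ⟨integralClosure R L ⧸ Q, inferInstance, inferInstance, Ideal.Quotient.mk Q,
    MulAction.stabilizer (L ≃ₐ[K] L) Q,
    IsFractionRing.stabilizerHom (L ≃ₐ[K] L) p Q k (integralClosure R L ⧸ Q), ?_, ?_, ?_, ?_⟩
  · exact Ideal.IsFractionRing.normal (L ≃ₐ[K] L) p Q k (integralClosure R L ⧸ Q)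
  · intro r
    have : φ r = algebraMap (R ⧸ p) k (Ideal.Quotient.mk p r) := rfl
    rw [this, ← IsScalarTower.algebraMap_apply]
    rfl
  · exact IsFractionRing.stabilizerHom_surjective _ _ _ _ _
  · intro σ b b' h
    have h2 := IsFractionRing.stabilizerHom_apply_apply_mk (G := L ≃ₐ[K] L) (P := p) (Q := Q)
      (K := k) (L := integralClosure R L ⧸ Q) σ b
    have h3 : (σ : L ≃ₐ[K] L) • b = b' := Subtype.ext h
    rw [h3] at h2
    exact h2

theorem root_spec (R L k Ω : Type) [CommRing R] [IsDomain R] [Field L] [Algebra R L]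
    (hinj : Function.Injective (algebraMap R L)) [Field k] [Field Ω] [Algebra k Ω]
    (φ : R →+* k) (ψ : integralClosure R L →+* Ω)
    (hψ : ∀ r : R, ψ (algebraMap R _ r) = algebraMap k Ω (φ r))
    (F : R[X]) (hs : (F.map (algebraMap R L)).Splits) (hl : φ F.leadingCoeff ≠ 0)
    (hsep : (F.map φ).Separable) :
    ((F.map φ).map (algebraMap k Ω)).Splits ∧
    (∀ x : Ω, aeval x (F.map φ) = 0 → ∃ (α : L) (b : integralClosure R L),
      aeval α F = 0 ∧ (b : L) = F.leadingCoeff • α ∧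
        ψ b = algebraMap k Ω (φ F.leadingCoeff) * x) ∧
    (∀ (α α' : L) (b b' : integralClosure R L), aeval α F = 0 → aeval α' F = 0 →
      (b : L) = F.leadingCoeff • α → (b' : L) = F.leadingCoeff • α' → ψ b = ψ b' → α = α') ∧
    (∀ (α : L) (b : integralClosure R L), aeval α F = 0 → (b : L) = F.leadingCoeff • α →
      aeval (ψ b / algebraMap k Ω (φ F.leadingCoeff)) (F.map φ) = 0) := by
  classical
  set l := F.leadingCoeff with hldef
  have hl0 : l ≠ 0 := fun h => hl (by rw [h, map_zero])
  have hF0 : F ≠ 0 := by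
    rw [← leadingCoeff_ne_zero]; exact hl0
  have hFL0 : F.map (algebraMap R L) ≠ 0 := (Polynomial.map_ne_zero_iff hinj).mpr hF0
  set s := (F.map (algebraMap R L)).roots with hsdef
  have hmem : ∀ α : L, α ∈ s ↔ aeval α F = 0 := fun α => by
    rw [hsdef, mem_roots hFL0, IsRoot.def, eval_map_algebraMap]
  let β : L → integralClosure R L := fun α =>
    if h : IsIntegral R (l • α) then ⟨l • α, h⟩ else 0
  have hβ : ∀ α, aeval α F = 0 → (β α : L) = l • α := fun α h => by
    have := isIntegral_leadingCoeff_smul F α h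
    simp only [β]
    rw [dif_pos this]
  have hβ' : ∀ α (b : integralClosure R L), aeval α F = 0 → (b : L) = l • α → b = β α :=
    fun α b h hb => Subtype.ext (hb.trans (hβ α h).symm)
  have hBL : Function.Injective (algebraMap (integralClosure R L) L) := Subtype.val_injective
  have hid : C (algebraMap R (integralClosure R L) l) *
      (s.map (fun α => C (algebraMap R (integralClosure R L) l) * X - C (β α))).prod =
      C (algebraMap R (integralClosure R L) l) ^ (Multiset.card s) *
        F.map (algebraMap R (integralClosure R L)) := by
    apply Polynomial.map_injective _ hBL
    have hfac := hs.eq_prod_roots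
    rw [leadingCoeff_map_of_injective hinj, ← hldef, ← hsdef] at hfac
    simp only [Polynomial.map_mul, Polynomial.map_pow, Polynomial.map_map, map_C,
      ← IsScalarTower.algebraMap_eq, ← IsScalarTower.algebraMap_apply,
      Polynomial.map_multiset_prod, Multiset.map_map]
    rw [hfac]
    have h1 : s.map (Polynomial.map (algebraMap (integralClosure R L) L) ∘
        fun α => C (algebraMap R (integralClosure R L) l) * X - C (β α)) =
        s.map (fun α => C (algebraMap R L l) * (X - C α)) := by
      apply Multiset.map_congr rfl
      intro α hα
      have h2 := hβ α ((hmem α).mp hα)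
      have h3 : algebraMap (integralClosure R L) L (β α) = algebraMap R L l * α := by
        rw [← Algebra.smul_def]; exact h2
      simp only [Function.comp, Polynomial.map_sub, Polynomial.map_mul, map_C, map_X, h3,
        ← IsScalarTower.algebraMap_apply, C_mul]
      ring
    rw [h1, Multiset.prod_map_mul, Multiset.map_const', Multiset.prod_replicate]
    ring
  set c := algebraMap k Ω (φ l) with hc
  have hc0 : c ≠ 0 := by
    rw [hc]; simpa using hl
  have hid2 : C c * (s.map (fun α => C c * X - C (ψ (β α)))).prod =
      C c ^ (Multiset.card s) * (F.map φ).map (algebraMap k Ω) := by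
    have h := congrArg (Polynomial.map ψ) hid
    have h4 : ψ.comp (algebraMap R (integralClosure R L)) = (algebraMap k Ω).comp φ :=
      RingHom.ext hψ
    simpa only [Polynomial.map_mul, Polynomial.map_pow, Polynomial.map_map, map_C, h4, hψ,
      Polynomial.map_multiset_prod, Multiset.map_map, Function.comp_def, Polynomial.map_sub,
      map_X, ← hc] using h
  have hCu : IsUnit (C c ^ (Multiset.card s)) := (isUnit_C.mpr hc0.isUnit).pow _
  have hFt0 : (F.map φ).map (algebraMap k Ω) ≠ 0 := hsep.map.ne_zero
  have heval : ∀ x : Ω, aeval x (F.map φ) = 0 ↔ ∃ α ∈ s, c * x - ψ (β α) = 0 := by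
    intro x
    have h := congrArg (eval x) hid2
    simp only [eval_mul, eval_C, eval_pow, eval_multiset_prod, Multiset.map_map, Function.comp_def,
      eval_sub, eval_X, eval_map_algebraMap] at h
    constructor
    · intro hx
      rw [hx, mul_zero, mul_eq_zero, or_iff_right hc0, Multiset.prod_eq_zero_iff,
        Multiset.mem_map] at h
      exact h
    · rintro ⟨α, hα, hx⟩
      have : (s.map (fun α => c * x - ψ (β α))).prod = 0 :=
        Multiset.prod_eq_zero (Multiset.mem_map.mpr ⟨α, hα, hx⟩)
      rw [this, mul_zero, eq_comm, mul_eq_zero, or_iff_right (pow_ne_zero _ hc0)] at h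
      exact h
  refine ⟨?_, ?_, ?_, ?_⟩
  · have hspl : (C c * (s.map (fun α => C c * X - C (ψ (β α)))).prod).Splits := by
      refine Splits.mul (Splits.C _) (Splits.multisetProd ?_)
      intro g hg
      obtain ⟨α, -, rfl⟩ := Multiset.mem_map.mp hg
      refine Splits.of_natDegree_le_one ?_
      compute_degree
    refine Splits.of_dvd hspl ?_ (hid2 ▸ dvd_mul_left _ _)
    rw [hid2]
    exact mul_ne_zero hCu.ne_zero hFt0
  · intro x hx
    obtain ⟨α, hα, h⟩ := (heval x).mp hx
    exact ⟨α, β α, (hmem α).mp hα, hβ α ((hmem α).mp hα), (sub_eq_zero.mp h).symm⟩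
  · intro α α' b b' hα hα' hb hb' hbb
    rw [hβ' α b hα hb, hβ' α' b' hα' hb'] at hbb
    by_contra hne
    obtain ⟨s', hs'⟩ := Multiset.exists_cons_of_mem ((hmem α).mpr hα)
    have h5 : α' ∈ s' := by
      have := (hmem α').mpr hα'
      rw [hs', Multiset.mem_cons] at this
      exact this.resolve_left (Ne.symm hne)
    obtain ⟨s'', hs''⟩ := Multiset.exists_cons_of_mem h5
    have hdvd : (C c * X - C (ψ (β α))) * (C c * X - C (ψ (β α))) ∣
        (F.map φ).map (algebraMap k Ω) := by
      have h6 : (C c * X - C (ψ (β α))) * (C c * X - C (ψ (β α))) ∣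
          C c ^ (Multiset.card s) * (F.map φ).map (algebraMap k Ω) := by
        rw [← hid2, hs', hs'']
        simp only [Multiset.map_cons, Multiset.prod_cons, ← hbb]
        exact ⟨C c * (s''.map (fun α => C c * X - C (ψ (β α)))).prod, by ring⟩
      exact (hCu.dvd_mul_left).mp h6
    have hu := (hsep.map (f := algebraMap k Ω)).squarefree _ hdvd
    have h7 := natDegree_eq_zero_of_isUnit hu
    have h8 : (C c * X - C (ψ (β α))).natDegree = 1 := by
      compute_degree!
    omega
  · intro α b hα hb
    rw [heval]
    refine ⟨α, (hmem α).mpr hα, ?_⟩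
    rw [← hβ' α b hα hb, mul_div_cancel₀ _ hc0, sub_self]

theorem conj_roots (R K L : Type) [CommRing R] [Field K] [Algebra R K] [Field L] [Algebra K L]
    [Algebra R L] [IsScalarTower R K L] [FiniteDimensional K L] [IsGalois K L] (F : R[X])
    (hF : Irreducible (F.map (algebraMap R K))) (α α' : L) (h : aeval α F = 0)
    (h' : aeval α' F = 0) : ∃ σ : L ≃ₐ[K] L, σ α = α' := by
  have h1 : aeval α (F.map (algebraMap R K)) = 0 := by rwa [aeval_map_algebraMap]
  have h2 : aeval α' (F.map (algebraMap R K)) = 0 := by rwa [aeval_map_algebraMap]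
  have e1 := minpoly.eq_of_irreducible hF h1
  have e2 := minpoly.eq_of_irreducible hF h2
  have h3 : IsConjRoot K α' α := by
    rw [IsConjRoot, ← e1, ← e2]
  exact h3.exists_algEquiv

theorem splits_of_root (R K L : Type) [CommRing R] [Field K] [Algebra R K] [Field L] [Algebra K L]
    [Algebra R L] [IsScalarTower R K L] [FiniteDimensional K L] [IsGalois K L] (F : R[X])
    (hF : Irreducible (F.map (algebraMap R K))) (α : L) (h : aeval α F = 0) :
    (F.map (algebraMap R L)).Splits := by
  have h1 : aeval α (F.map (algebraMap R K)) = 0 := by rwa [aeval_map_algebraMap]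
  have e1 := minpoly.eq_of_irreducible hF h1
  have hs := Normal.splits (F := K) (K := L) inferInstance α
  have hne : (minpoly K α).map (algebraMap K L) ≠ 0 :=
    (Polynomial.map_ne_zero_iff (algebraMap K L).injective).mpr
      (minpoly.ne_zero (Algebra.IsIntegral.isIntegral α))
  have hd : F.map (algebraMap R L) ∣ (minpoly K α).map (algebraMap K L) := by
    rw [← e1, Polynomial.map_mul, Polynomial.map_map, ← IsScalarTower.algebraMap_eq]
    exact dvd_mul_right _ _
  exact hs.of_dvd hne hd

theorem main_aux (R K L k : Type) [CommRing R] [IsDomain R] [IsIntegrallyClosed R]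
    [Field K] [Algebra R K] [IsFractionRing R K] [Field L] [Algebra K L] [Algebra R L]
    [IsScalarTower R K L] [FiniteDimensional K L] [IsGalois K L] [Field k] [CharZero k]
    (φ : R →+* k) (hφ : Function.Surjective φ)
    (P : R[X]) (hirrP : Irreducible (P.map (algebraMap R K)))
    (hdeg : 1 ≤ P.natDegree)
    (hPL : (P.map (algebraMap R L)).Splits)
    (hadj : Algebra.adjoin K {α : L | aeval α P = 0} = ⊤)
    (r : ℕ) (M : Fin r → Subgroup (L ≃ₐ[K] L))
    (hmax : ∀ i, IsCoatom (M i))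
    (hrep : ∀ H : Subgroup (L ≃ₐ[K] L),
      IsCoatom H → ∃ i, ∃ g, Subgroup.map (MulAut.conj g).toMonoidHom (M i) = H)
    (f : Fin r → R[X])
    (hmonic : ∀ i, (f i).Monic)
    (hirr : ∀ i, Irreducible ((f i).map (algebraMap R K)))
    (hgen : ∀ i, ∃ θ : L, aeval θ (f i) = 0 ∧
        IntermediateField.fixedField (M i) = IntermediateField.adjoin K {θ})
    (hl : φ P.leadingCoeff ≠ 0)
    (hΔ : (P.map φ).Separable)
    (hdisc : ∀ i, ((f i).map φ).Separable) :
    (¬ Irreducible (P.map φ) ∨ IsEmpty ((P.map φ).Gal ≃* (L ≃ₐ[K] L))) ↔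
      ∃ i, ∃ x : k, ((f i).map φ).eval x = 0 := by
  obtain ⟨Ω, _, _, ψ, D, ρ, hnorm, hψ, hρ, hρψ⟩ := key_place R K L k φ hφ
  have hfin : Finite (Ω ≃ₐ[k] Ω) := Finite.of_surjective ρ hρ
  have hgal : IsGalois k Ω := { }
  have hfd : FiniteDimensional k Ω := IsGalois.finiteDimensional_of_finite k Ω
  have hinj : Function.Injective (algebraMap R L) := by
    rw [IsScalarTower.algebraMap_eq R K L]
    exact (algebraMap K L).injective.comp (IsFractionRing.injective R K)
  have hsmul : ∀ (σ : L ≃ₐ[K] L) (a : R) (x : L), σ (a • x) = a • σ x := by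
    intro σ a x
    rw [Algebra.smul_def, Algebra.smul_def, IsScalarTower.algebraMap_apply R K L]
    simp
  have hσroot : ∀ (σ : L ≃ₐ[K] L) (F : R[X]) (α : L), aeval α F = 0 → aeval (σ α) F = 0 := by
    intro σ F α h
    have h1 := congrArg σ h
    rw [map_zero, ← aeval_map_algebraMap K, ← aeval_algHom_apply, aeval_map_algebraMap] at h1
    exact h1
  obtain ⟨hsplΩ, hroot, hdist, hback⟩ := root_spec R L k Ω hinj φ ψ hψ P hPL hl hΔ
  have hc0 : algebraMap k Ω (φ P.leadingCoeff) ≠ 0 := by simpa using hl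
  have hfix : ∀ σ : D, (∀ x : Ω, aeval x (P.map φ) = 0 → ρ σ x = x) → σ = 1 := by
    intro σ hσ
    have h1 : ∀ α : L, aeval α P = 0 → (σ : L ≃ₐ[K] L) α = α := by
      intro α hα
      have hα' := hσroot σ P α hα
      let b : integralClosure R L := ⟨_, isIntegral_leadingCoeff_smul P α hα⟩
      let b' : integralClosure R L := ⟨_, isIntegral_leadingCoeff_smul P _ hα'⟩
      have hbb := hρψ σ b b' (hsmul _ _ _)
      have hx := hσ _ (hback α b hα rfl)
      rw [map_div₀, AlgEquiv.commutes, div_left_inj' hc0, hbb] at hx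
      exact hdist _ _ b' b hα' hα rfl rfl hx
    have h2 : ((σ : L ≃ₐ[K] L) : L →ₐ[K] L) = AlgHom.id K L :=
      AlgHom.ext_of_adjoin_eq_top hadj fun x hx => h1 x hx
    apply Subtype.ext
    ext x
    exact DFunLike.congr_fun h2 x
  have : Fact (((P.map φ).map (algebraMap k Ω)).Splits) := ⟨hsplΩ⟩
  let π : D →* (P.map φ).Gal := (Gal.restrict (P.map φ) Ω).comp ρ
  have hπ : Function.Bijective π := by
    refine ⟨?_, (Gal.restrict_surjective _ _).comp hρ⟩
    rw [injective_iff_map_eq_one]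
    intro σ hσ
    apply hfix
    intro x hx
    have hx' : x ∈ (P.map φ).rootSet Ω := (mem_rootSet_of_ne hΔ.ne_zero).mpr hx
    have h1 := Gal.restrict_smul (p := P.map φ) (ρ σ) ⟨x, hx'⟩
    have h2 : Gal.restrict (P.map φ) Ω (ρ σ) = 1 := hσ
    rw [h2, one_smul] at h1
    exact h1.symm
  have hfsplit : ∀ i, ((f i).map (algebraMap R L)).Splits := fun i => by
    obtain ⟨θ, hθ, -⟩ := hgen i
    exact splits_of_root R K L (f i) (hirr i) θ hθ
  have hlf : ∀ i, φ (f i).leadingCoeff ≠ 0 := fun i => by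
    rw [(hmonic i).leadingCoeff, map_one]; exact one_ne_zero
  by_cases hD : D = ⊤
  · -- full decomposition group
    refine iff_of_false ?_ ?_
    · rw [not_or, not_not, not_isEmpty_iff]
      refine ⟨?_, ⟨(MulEquiv.ofBijective π hπ).symm.trans
        ((MulEquiv.subgroupCongr hD).trans Subgroup.topEquiv)⟩⟩
      have htrans : ∀ x y : Ω, aeval x (P.map φ) = 0 → aeval y (P.map φ) = 0 →
          ∃ τ : Ω ≃ₐ[k] Ω, τ x = y := by
        intro x y hx hy
        obtain ⟨α, b, hα, hb, hbx⟩ := hroot x hx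
        obtain ⟨α', b', hα', hb', hby⟩ := hroot y hy
        obtain ⟨σ, hσ⟩ := conj_roots R K L P hirrP α α' hα hα'
        have h1 := hρψ ⟨σ, hD ▸ Subgroup.mem_top σ⟩ b b' (by
          rw [hb, hb', ← hσ]; exact hsmul _ _ _)
        rw [hbx, hby, map_mul, AlgEquiv.commutes, mul_right_inj' hc0] at h1
        exact ⟨_, h1⟩
      have hdegt : (P.map φ).natDegree = P.natDegree :=
        natDegree_map_of_leadingCoeff_ne_zero _ hl
      have hex : ∀ h : k[X], h ∣ P.map φ → h.natDegree ≠ 0 → ∃ y : Ω, aeval y h = 0 := by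
        intro h hd hne
        have hs : (h.map (algebraMap k Ω)).Splits :=
          hsplΩ.of_dvd (hΔ.map.ne_zero) (Polynomial.map_dvd _ hd)
        have hd0 : (h.map (algebraMap k Ω)).degree ≠ 0 := by
          rw [degree_map]
          intro h0
          exact hne (natDegree_eq_zero_iff_degree_le_zero.mpr h0.le)
        obtain ⟨y, hy⟩ := hs.exists_eval_eq_zero hd0
        exact ⟨y, by rwa [eval_map_algebraMap] at hy⟩
      obtain ⟨x, hx⟩ := hex _ dvd_rfl (by omega)
      have hxi : IsIntegral k x := Algebra.IsIntegral.isIntegral x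
      obtain ⟨h, hh⟩ := minpoly.dvd k x hx
      have hu : IsUnit h := by
        by_contra hnu
        have h0 : h ≠ 0 := by
          rintro rfl
          exact hΔ.ne_zero (by rw [hh, mul_zero])
        have hn : h.natDegree ≠ 0 := fun h1 => hnu (by
          rw [natDegree_eq_zero] at h1
          obtain ⟨a, rfl⟩ := h1
          exact isUnit_C.mpr (isUnit_iff_ne_zero.mpr (by simpa using h0)))
        obtain ⟨y, hy⟩ := hex h (hh ▸ dvd_mul_left _ _) hn
        obtain ⟨τ, hτ⟩ := htrans x y hx (by rw [hh, map_mul, hy, mul_zero])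
        have hmy : aeval y (minpoly k x) = 0 := by
          rw [← hτ, aeval_algHom_apply, minpoly.aeval, map_zero]
        have hcop : IsCoprime (minpoly k x) h := by
          have h2 := hΔ
          rw [hh] at h2
          exact h2.isCoprime
        obtain ⟨u, v, huv⟩ := hcop
        have h3 := congrArg (aeval y) huv
        simp [hmy, hy] at h3
      rw [hh]
      exact (irreducible_mul_isUnit hu).mpr (minpoly.irreducible hxi)
    · rintro ⟨i, x, hx⟩
      obtain ⟨-, hrooti, hdisti, -⟩ :=
        root_spec R L k Ω hinj φ ψ hψ (f i) (hfsplit i) (hlf i) (hdisc i)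
      have hx' : aeval (algebraMap k Ω x) ((f i).map φ) = 0 := by
        rw [aeval_algebraMap_apply, ← coe_aeval_eq_eval] at *
        rw [hx, map_zero]
      obtain ⟨α, b, hα, hb, hbx⟩ := hrooti _ hx'
      obtain ⟨θ, hθ, hfixθ⟩ := hgen i
      have hαfix : ∀ σ : L ≃ₐ[K] L, σ α = α := by
        intro σ
        have hα' := hσroot σ (f i) α hα
        let b' : integralClosure R L := ⟨_, isIntegral_leadingCoeff_smul (f i) _ hα'⟩
        have h1 := hρψ ⟨σ, hD ▸ Subgroup.mem_top σ⟩ b b' (by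
          rw [hb]; exact hsmul _ _ _)
        have h2 : ψ b = ψ b' := by
          rw [← h1, hbx, ← map_mul, AlgEquiv.commutes]
        exact (hdisti _ _ b b' hα hα' hb rfl h2).symm
      obtain ⟨σ, hσ⟩ := conj_roots R K L (f i) (hirr i) α θ hα hθ
      rw [hαfix] at hσ
      have hbot : IntermediateField.adjoin K {θ} = ⊥ := by
        rw [IntermediateField.adjoin_simple_eq_bot_iff, IsGalois.mem_bot_iff_fixed, ← hσ]
        exact hαfix
      apply (hmax i).1
      rw [← IntermediateField.fixingSubgroup_fixedField (M i), hfixθ, hbot,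
        IntermediateField.fixingSubgroup_bot]
  · refine iff_of_true (Or.inr ⟨fun e => hD ?_⟩) ?_
    · apply Subgroup.eq_top_of_card_eq
      exact Nat.card_congr ((Equiv.ofBijective π hπ).trans e.toEquiv)
    · obtain ⟨H, hH, hDH⟩ := (eq_top_or_exists_le_coatom D).resolve_left hD
      obtain ⟨i, g, hg⟩ := hrep H hH
      obtain ⟨θ, hθ, hfixθ⟩ := hgen i
      obtain ⟨-, -, -, hbacki⟩ :=
        root_spec R L k Ω hinj φ ψ hψ (f i) (hfsplit i) (hlf i) (hdisc i)
      have hgθ := hσroot g (f i) θ hθ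
      have hθM : θ ∈ IntermediateField.fixedField (M i) := by
        rw [hfixθ]; exact IntermediateField.mem_adjoin_simple_self K θ
      have hDfix : ∀ σ : D, (σ : L ≃ₐ[K] L) (g θ) = g θ := by
        intro σ
        have h1 : (σ : L ≃ₐ[K] L) ∈ H := hDH σ.2
        rw [← hg] at h1
        obtain ⟨m, hm, hmσ⟩ := h1
        have h2 : m θ = θ := hθM ⟨m, hm⟩
        have h3 : (σ : L ≃ₐ[K] L) = g * m * g⁻¹ := hmσ.symm
        have h4 : g⁻¹ (g θ) = θ := g.symm_apply_apply θ
        rw [h3, AlgEquiv.mul_apply, AlgEquiv.mul_apply, h4, h2]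
      let b : integralClosure R L := ⟨_, isIntegral_leadingCoeff_smul (f i) _ hgθ⟩
      have hb : ψ b ∈ (⊥ : IntermediateField k Ω) := by
        rw [IsGalois.mem_bot_iff_fixed]
        intro τ
        obtain ⟨σ, rfl⟩ := hρ τ
        apply hρψ
        change (σ : L ≃ₐ[K] L) ((f i).leadingCoeff • g θ) = (f i).leadingCoeff • g θ
        rw [hsmul, hDfix]
      obtain ⟨x, hx⟩ := IntermediateField.mem_bot.mp hb
      refine ⟨i, x, ?_⟩
      have h1 := hbacki _ b hgθ rfl
      rw [(hmonic i).leadingCoeff, map_one, map_one, div_one, ← hx, aeval_algebraMap_apply,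
        map_eq_zero, coe_aeval_eq_eval] at h1
      exact h1

end Helpers

/-- Theorem `main_hit_thm_intro`: Let `P ∈ ℚ[T][X]` be irreducible,
separable of degree `≥ 1` in `X` over `ℚ(T)`, with nontrivial Galois group `G` over
`ℚ(T)`.  Let `M₁, …, M_r` represent all conjugacy classes of maximal subgroups of `G`,
`F_i` the fixed field of `M_i`, and `f_i(T,X)` a monic irreducible polynomial of
`ℚ[T][X]` such that `F_i/ℚ(T)` is generated by a root of `f_i`.  If `t ∈ ℚ` satisfies
`Δ(t)·ℓ(t)·∏ᵢ disc f_i(t,X) ≠ 0` (equivalently `ℓ(t) ≠ 0` and the specializations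
`P(t,X)` and `f_i(t,X)` are all separable), then `P(t,X)` is reducible over `ℚ` or has
Galois group not isomorphic to `G` iff some `f_i(t,X)` has a rational root. -/
theorem stmt_2
    (P : Polynomial (Polynomial ℚ))
    (hPirr : Irreducible P)
    (hdeg : 1 ≤ P.natDegree)
    (hsep : (P.map (algebraMap (Polynomial ℚ) (RatFunc ℚ))).Separable)
    (hG : Nontrivial (P.map (algebraMap (Polynomial ℚ) (RatFunc ℚ))).Gal)
    (r : ℕ)
    (M : Fin r → Subgroup (P.map (algebraMap (Polynomial ℚ) (RatFunc ℚ))).Gal)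
    (hmax : ∀ i, IsCoatom (M i))
    (hrep : ∀ H : Subgroup (P.map (algebraMap (Polynomial ℚ) (RatFunc ℚ))).Gal,
      IsCoatom H → ∃ i, ∃ g, Subgroup.map (MulAut.conj g).toMonoidHom (M i) = H)
    (f : Fin r → Polynomial (Polynomial ℚ))
    (hmonic : ∀ i, (f i).Monic)
    (hirr : ∀ i, Irreducible (f i))
    (hgen : ∀ i, ∃ θ : (P.map (algebraMap (Polynomial ℚ) (RatFunc ℚ))).SplittingField,
      Polynomial.aeval θ ((f i).map (algebraMap (Polynomial ℚ) (RatFunc ℚ))) = 0 ∧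
        IntermediateField.fixedField (M i) = IntermediateField.adjoin (RatFunc ℚ) {θ})
    (t : ℚ)
    (hl : P.leadingCoeff.eval t ≠ 0)
    (hΔ : (P.map (Polynomial.evalRingHom t)).Separable)
    (hdisc : ∀ i, ((f i).map (Polynomial.evalRingHom t)).Separable) :
    (¬ Irreducible (P.map (Polynomial.evalRingHom t)) ∨
        IsEmpty ((P.map (Polynomial.evalRingHom t)).Gal ≃*
          (P.map (algebraMap (Polynomial ℚ) (RatFunc ℚ))).Gal)) ↔
      ∃ i, ∃ x : ℚ, ((f i).map (Polynomial.evalRingHom t)).eval x = 0 := by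
  have hgal : IsGalois (RatFunc ℚ)
      (P.map (algebraMap (Polynomial ℚ) (RatFunc ℚ))).SplittingField :=
    IsGalois.of_separable_splitting_field hsep
  have hPprim : P.IsPrimitive := hPirr.isPrimitive (by omega)
  refine main_aux (Polynomial ℚ) (RatFunc ℚ)
    (P.map (algebraMap (Polynomial ℚ) (RatFunc ℚ))).SplittingField ℚ (evalRingHom t)
    (fun a => ⟨C a, by simp⟩) P
    (hPprim.irreducible_iff_irreducible_map_fraction_map.mp hPirr) hdeg ?_ ?_ r M hmax hrep f
    hmonic (fun i => (hmonic i).irreducible_iff_irreducible_map_fraction_map.mp (hirr i)) ?_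
    hl hΔ hdisc
  · have h := SplittingField.splits (P.map (algebraMap (Polynomial ℚ) (RatFunc ℚ)))
    rwa [Polynomial.map_map, ← IsScalarTower.algebraMap_eq] at h
  · have h := SplittingField.adjoin_rootSet (P.map (algebraMap (Polynomial ℚ) (RatFunc ℚ)))
    rw [← h]
    congr 1
    ext α
    rw [mem_rootSet_of_ne hsep.ne_zero, aeval_map_algebraMap]
    rfl
  · intro i
    obtain ⟨θ, h1, h2⟩ := hgen i
    exact ⟨θ, by rwa [aeval_map_algebraMap] at h1, h2⟩
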